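/- For every integer α ≥ 1, the Laurent series in the d_5 tower satisfy L_{2α−1} = q^2 · (J_7^{16}/J_14^5) · ∑_{n≥0} d_5(7^{2α−1}·n + λ_{2α−1})·q^n and L_{2α} = q · (J_1^{16}/J_2^5) · ∑_{n≥0} d_5(7^{2α}·n + λ_{2α})·q^n, where λ_β = (1 + 7^β)/4 if β is odd and λ_β = (1 + 3·7^β)/4 if β is even. -/

import Mathlib

noncomputable section

/-- `J b = ∏_{k=1}^∞ (1 - q^{b·k})` as a formal power series with integer coefficients. -/
def J (b : ℕ) : PowerSeries ℤ :=
  PowerSeries.mk fun n =>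
    PowerSeries.coeff n
      (∏ k ∈ Finset.range (n + 1), (1 - (PowerSeries.X : PowerSeries ℤ) ^ (b * (k + 1))))

/-- `λ_β = (1 + 7^β)/4` if `β` is odd, `λ_β = (1 + 3·7^β)/4` if `β` is even
(both divisions are exact). -/
def lam (β : ℕ) : ℕ := if β % 2 = 1 then (1 + 7 ^ β) / 4 else (1 + 3 * 7 ^ β) / 4

open PowerSeries in
lemma coeff_U_mul (U : LaurentSeries ℤ → LaurentSeries ℤ)
    (hU : ∀ (f : LaurentSeries ℤ) (n : ℤ), (U f).coeff n = f.coeff (7 * n))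
    (f P Q : LaurentSeries ℤ) (h1 : ∀ n : ℤ, Q.coeff (7 * n) = P.coeff n)
    (h2 : ∀ m : ℤ, ¬ (7 ∣ m) → Q.coeff m = 0) : U (f * Q) = U f * P := by
  ext n
  rw [hU, HahnSeries.coeff_mul, HahnSeries.coeff_mul]
  symm
  apply Finset.sum_of_injOn (fun p : ℤ × ℤ => (7 * p.1, 7 * p.2))
  · rintro ⟨a, b⟩ _ ⟨c, d⟩ _ h
    simp only [Prod.mk.injEq] at h ⊢
    omega
  · rintro ⟨a, b⟩ h
    simp only [Finset.mem_coe, Finset.mem_antidiagonal,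
      HahnSeries.mem_support, hU, ← h1] at h ⊢
    refine ⟨h.1, h.2.1, ?_⟩
    have := h.2.2
    omega
  · rintro ⟨a, b⟩ h hn
    exfalso
    simp only [Finset.mem_antidiagonal, HahnSeries.mem_support] at h
    obtain ⟨ha, hb, hab⟩ := h
    by_cases hd : (7 : ℤ) ∣ b
    · obtain ⟨c, rfl⟩ := hd
      have : a = 7 * (n - c) := by omega
      subst this
      apply hn
      refine ⟨(n - c, c), ?_, rfl⟩
      simp only [Finset.mem_coe, Finset.mem_antidiagonal, HahnSeries.mem_support, hU, ← h1]
      exact ⟨ha, hb, by omega⟩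
    · exact hb (h2 b hd)
  · rintro ⟨a, b⟩ _
    simp only [hU, h1]

lemma U_mul_expand (U : LaurentSeries ℤ → LaurentSeries ℤ)
    (hU : ∀ (f : LaurentSeries ℤ) (n : ℤ), (U f).coeff n = f.coeff (7 * n))
    (f : LaurentSeries ℤ) (P : PowerSeries ℤ) :
    U (f * HahnSeries.ofPowerSeries ℤ ℤ (PowerSeries.expand 7 (by norm_num) P))
      = U f * HahnSeries.ofPowerSeries ℤ ℤ P := by
  apply coeff_U_mul U hU
  · intro n
    rw [PowerSeries.coeff_coe, PowerSeries.coeff_coe]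
    by_cases h : n < 0
    · rw [if_pos h, if_pos (by omega)]
    · rw [if_neg h, if_neg (by omega)]
      have : (7 * n).natAbs = 7 * n.natAbs := by omega
      rw [this, PowerSeries.coeff_expand_mul]
  · intro m hm
    rw [PowerSeries.coeff_coe]
    split_ifs with h
    · rfl
    · exact PowerSeries.coeff_expand_of_not_dvd _ _ _ (by omega)

lemma U_mk (U : LaurentSeries ℤ → LaurentSeries ℤ)
    (hU : ∀ (f : LaurentSeries ℤ) (n : ℤ), (U f).coeff n = f.coeff (7 * n))
    (a c e : ℕ) (h : 7 * c = a + e) (he : e < 7) (t : ℕ → ℤ) :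
    U (HahnSeries.ofPowerSeries ℤ ℤ (PowerSeries.X ^ a * PowerSeries.mk t))
      = HahnSeries.ofPowerSeries ℤ ℤ
        (PowerSeries.X ^ c * PowerSeries.mk fun n => t (7 * n + e)) := by
  ext n
  rw [hU, PowerSeries.coeff_coe, PowerSeries.coeff_coe]
  by_cases hn : n < 0
  · rw [if_pos hn, if_pos (by omega)]
  · rw [if_neg hn, if_neg (by omega), PowerSeries.coeff_X_pow_mul', PowerSeries.coeff_X_pow_mul']
    by_cases hc : c ≤ n.natAbs
    · rw [if_pos hc, if_pos (by omega), PowerSeries.coeff_mk, PowerSeries.coeff_mk]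
      congr 1
      omega
    · rw [if_neg hc, if_neg (by omega)]

lemma J_stable (b : ℕ) (hb : 0 < b) (n N : ℕ) (h : n + 1 ≤ N) :
    PowerSeries.coeff n (J b) = PowerSeries.coeff n
      (∏ k ∈ Finset.range N, (1 - (PowerSeries.X : PowerSeries ℤ) ^ (b * (k + 1)))) := by
  induction N, h using Nat.le_induction with
  | base => simp [J]
  | succ N hN ih =>
    rw [Finset.prod_range_succ, mul_sub, mul_one, map_sub, PowerSeries.coeff_mul_X_pow',
      if_neg, sub_zero, ih]
    have : N + 1 ≤ b * (N + 1) := Nat.le_mul_of_pos_left _ hb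
    omega

lemma J_expand (b : ℕ) (hb : 0 < b) :
    PowerSeries.expand 7 (by norm_num) (J b) = J (7 * b) := by
  have key : ∀ N, PowerSeries.expand 7 (by norm_num)
      (∏ k ∈ Finset.range N, (1 - (PowerSeries.X : PowerSeries ℤ) ^ (b * (k + 1))))
      = ∏ k ∈ Finset.range N, (1 - (PowerSeries.X : PowerSeries ℤ) ^ (7 * b * (k + 1))) := by
    intro N
    rw [map_prod]
    refine Finset.prod_congr rfl fun k _ => ?_
    rw [map_sub, map_one, map_pow, PowerSeries.expand_X, ← pow_mul, mul_assoc]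
  ext n
  rw [J_stable (7 * b) (by omega) n (n + 1) le_rfl, ← key]
  by_cases h : 7 ∣ n
  · obtain ⟨m, rfl⟩ := h
    rw [PowerSeries.coeff_expand_mul, PowerSeries.coeff_expand_mul]
    exact J_stable b hb m _ (by omega)
  · rw [PowerSeries.coeff_expand_of_not_dvd _ _ _ h, PowerSeries.coeff_expand_of_not_dvd _ _ _ h]

lemma J_ne (b : ℕ) (hb : 0 < b) : J b ≠ 0 := by
  intro h
  have h1 : PowerSeries.coeff 0 (J b) = 1 := by
    rw [J_stable b hb 0 1 le_rfl]
    simp [hb.ne']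
  rw [h] at h1
  simp at h1

lemma lam_odd (β : ℕ) : lam (2 * β + 1) = 7 ^ (2 * β) * 1 + lam (2 * β) := by
  have h : 7 ^ (2 * β) % 4 = 1 := by
    rw [pow_mul, Nat.pow_mod]; norm_num
  rw [lam, lam, if_pos (by omega), if_neg (by omega), pow_succ]
  omega

lemma lam_even (β : ℕ) : lam (2 * β + 2) = 7 ^ (2 * β + 1) * 5 + lam (2 * β + 1) := by
  have h : 7 ^ (2 * β) % 4 = 1 := by
    rw [pow_mul, Nat.pow_mod]; norm_num
  rw [lam, lam, if_neg (by omega), if_pos (by omega), pow_succ, pow_succ]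
  omega

/-- in the d₅ tower (`A₅ = q^{12}·J_2^5·J_49^{16}/(J_1^{16}·J_98^5)`,
`L_0 = 1`, `L_{2β+1} = U_7(A₅·L_{2β})`, `L_{2β+2} = U_7(L_{2β+1})`), for every `α ≥ 1`:
`L_{2α−1} = q^2·(J_7^{16}/J_14^5)·∑_{n≥0} d_5(7^{2α−1}·n + λ_{2α−1})·qⁿ` and
`L_{2α} = q·(J_1^{16}/J_2^5)·∑_{n≥0} d_5(7^{2α}·n + λ_{2α})·qⁿ`; stated multiplied
through by the invertible series `J_14^5` resp. `J_2^5`. -/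
theorem stmt13
    (d5 : ℕ → ℤ) (hd : PowerSeries.mk d5 * (J 1) ^ 16 = (J 2) ^ 5)
    (U : LaurentSeries ℤ → LaurentSeries ℤ)
    (hU : ∀ (f : LaurentSeries ℤ) (n : ℤ), (U f).coeff n = f.coeff (7 * n))
    (A5 : LaurentSeries ℤ)
    (hA5 : A5 * HahnSeries.ofPowerSeries ℤ ℤ ((J 1) ^ 16 * (J 98) ^ 5)
        = HahnSeries.ofPowerSeries ℤ ℤ (PowerSeries.X ^ 12 * (J 2) ^ 5 * (J 49) ^ 16))
    (L : ℕ → LaurentSeries ℤ) (hL0 : L 0 = 1)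
    (hLodd : ∀ β : ℕ, L (2 * β + 1) = U (A5 * L (2 * β)))
    (hLeven : ∀ β : ℕ, L (2 * β + 2) = U (L (2 * β + 1)))
    (α : ℕ) (hα : 1 ≤ α) :
    L (2 * α - 1) * HahnSeries.ofPowerSeries ℤ ℤ ((J 14) ^ 5)
      = HahnSeries.ofPowerSeries ℤ ℤ
          (PowerSeries.X ^ 2 * (J 7) ^ 16 *
            PowerSeries.mk fun n => d5 (7 ^ (2 * α - 1) * n + lam (2 * α - 1)))
    ∧
    L (2 * α) * HahnSeries.ofPowerSeries ℤ ℤ ((J 2) ^ 5)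
      = HahnSeries.ofPowerSeries ℤ ℤ
          (PowerSeries.X * (J 1) ^ 16 *
            PowerSeries.mk fun n => d5 (7 ^ (2 * α) * n + lam (2 * α))) := by
  set ι := HahnSeries.ofPowerSeries ℤ ℤ with hι
  have inj : Function.Injective ι := HahnSeries.ofPowerSeries_injective
  have ne : ∀ P : PowerSeries ℤ, P ≠ 0 → ι P ≠ 0 := fun P hP => by
    rwa [Ne, map_eq_zero_iff ι inj]
  have E14 : PowerSeries.expand 7 (by norm_num) (J 14 ^ 5) = J 98 ^ 5 := by
    rw [map_pow, J_expand 14 (by norm_num)]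
  have E7 : PowerSeries.expand 7 (by norm_num) (J 7 ^ 16) = J 49 ^ 16 := by
    rw [map_pow, J_expand 7 (by norm_num)]
  have E2 : PowerSeries.expand 7 (by norm_num) (J 2 ^ 5) = J 14 ^ 5 := by
    rw [map_pow, J_expand 2 (by norm_num)]
  have E1 : PowerSeries.expand 7 (by norm_num) (J 1 ^ 16) = J 7 ^ 16 := by
    rw [map_pow, J_expand 1 (by norm_num)]
  have hne : ι (J 1 ^ 16 * J 2 ^ 5) ≠ 0 :=
    ne _ (mul_ne_zero (pow_ne_zero _ (J_ne 1 (by norm_num))) (pow_ne_zero _ (J_ne 2 (by norm_num))))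
  -- odd step
  have stepO : ∀ (β : ℕ) (S : PowerSeries ℤ), L (2 * β) * ι (J 2 ^ 5) = ι (J 1 ^ 16 * S) →
      L (2 * β + 1) * ι (J 14 ^ 5) = U (ι (PowerSeries.X ^ 12 * S)) * ι (J 7 ^ 16) := by
    intro β S h
    rw [hLodd, ← U_mul_expand U hU, ← U_mul_expand U hU, E14, E7]
    congr 1
    apply mul_right_cancel₀ hne
    simp only [map_mul] at hA5 h ⊢
    linear_combination (L (2 * β) * ι (J 2 ^ 5)) * hA5
      + (ι (PowerSeries.X ^ 12) * ι (J 2 ^ 5) * ι (J 49 ^ 16)) * h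
  have stepE : ∀ β : ℕ,
      L (2 * β + 1) * ι (J 14 ^ 5) = ι (PowerSeries.X ^ 2 * J 7 ^ 16 *
        PowerSeries.mk fun n => d5 (7 ^ (2 * β + 1) * n + lam (2 * β + 1))) →
      L (2 * β + 2) * ι (J 2 ^ 5) = ι (PowerSeries.X * J 1 ^ 16 *
        PowerSeries.mk fun n => d5 (7 ^ (2 * β + 2) * n + lam (2 * β + 2))) := by
    intro β h
    rw [hLeven, ← U_mul_expand U hU, E2, h, mul_right_comm, map_mul, ← E1, U_mul_expand U hU,
      U_mk U hU 2 1 5 (by norm_num) (by norm_num), ← map_mul, pow_one, mul_right_comm]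
    refine congrArg (fun t => ι (_ * PowerSeries.mk t)) (funext fun n => ?_)
    refine congrArg d5 ?_
    rw [lam_even]
    ring
  have O : ∀ β : ℕ, L (2 * β + 1) * ι (J 14 ^ 5) = ι (PowerSeries.X ^ 2 * J 7 ^ 16 *
        PowerSeries.mk fun n => d5 (7 ^ (2 * β + 1) * n + lam (2 * β + 1))) := by
    intro β
    induction β with
    | zero =>
      rw [stepO 0 (PowerSeries.mk d5) (by rw [mul_zero, hL0, one_mul, ← hd, mul_comm]),
        U_mk U hU 12 2 2 (by norm_num) (by norm_num), ← map_mul, mul_right_comm]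
      refine congrArg (fun t => ι (_ * PowerSeries.mk t)) (funext fun n => ?_)
      simp [lam]
    | succ β ih =>
      have h := stepE β ih
      rw [stepO (β + 1) (PowerSeries.X *
          PowerSeries.mk fun n => d5 (7 ^ (2 * β + 2) * n + lam (2 * β + 2)))
          (by rw [show 2 * (β + 1) = 2 * β + 2 by ring, h]; congr 1; ring),
        ← mul_assoc, ← pow_succ, U_mk U hU 13 2 1 (by norm_num) (by norm_num), ← map_mul,
        mul_right_comm]
      refine congrArg (fun t => ι (_ * PowerSeries.mk t)) (funext fun n => ?_)
      refine congrArg d5 ?_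
      rw [lam_odd, show 2 * (β + 1) = 2 * β + 2 by ring]
      ring
  obtain ⟨β, rfl⟩ : ∃ β, α = β + 1 := ⟨α - 1, by omega⟩
  exact ⟨O β, stepE β (O β)⟩
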